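/- (Per-coordinate expansion bound for the root coordinates.) Let (V,d) be a metric space and b : V → ℝ a 1-Lipschitz function with b(v) ≥ 1/2 for all v ∈ V, with scale weights p_t(v) as defined. Then for all u, v ∈ V, every t ∈ ℕ, every α ∈ [0,1] and β ∈ [0,4], and all reals x_v, x_u ≥ 0 with |x_v − x_u| ≤ d(u,v), one has |p_t(v)·g_{t,α,β}(x_v) − p_t(u)·g_{t,α,β}(x_u)| ≤ 12·d(u,v). -/

import Mathlib

/-- The sawtooth function `g_t(x) = 2^t - |x - (⌊x/2^{t+1}⌋·2^{t+1} + 2^t)|`. -/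
noncomputable def sawtooth (t : ℕ) (x : ℝ) : ℝ :=
  2 ^ t - |x - ((⌊x / 2 ^ (t + 1)⌋ : ℝ) * 2 ^ (t + 1) + 2 ^ t)|

lemma saw_floor (t : ℕ) (x : ℝ) :
    (⌊x / 2 ^ (t + 1)⌋ : ℝ) * (2 * 2 ^ t) ≤ x ∧
      x < ((⌊x / 2 ^ (t + 1)⌋ : ℝ) + 1) * (2 * 2 ^ t) := by
  have hT : (0 : ℝ) < 2 * 2 ^ t := by positivity
  have e : (2 : ℝ) ^ (t + 1) = 2 * 2 ^ t := by ring
  rw [e]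
  exact ⟨(le_div_iff₀ hT).1 (Int.floor_le _), (div_lt_iff₀ hT).1 (Int.lt_floor_add_one _)⟩

lemma saw_bounds (t : ℕ) (x : ℝ) : 0 ≤ sawtooth t x ∧ sawtooth t x ≤ 2 ^ t := by
  obtain ⟨h1, h2⟩ := saw_floor t x
  have e : (2 : ℝ) ^ (t + 1) = 2 * 2 ^ t := by ring
  unfold sawtooth
  constructor
  · generalize ⌊x / 2 ^ (t + 1)⌋ = n at *
    rw [sub_nonneg, abs_le, e]
    constructor <;> linarith
  · have := abs_nonneg (x - ((⌊x / 2 ^ (t + 1)⌋ : ℝ) * 2 ^ (t + 1) + 2 ^ t))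
    linarith

lemma saw_le (t : ℕ) (x : ℝ) (k : ℤ) : sawtooth t x ≤ |x - k * (2 * 2 ^ t)| := by
  obtain ⟨h1, h2⟩ := saw_floor t x
  have hT : (0 : ℝ) < 2 * 2 ^ t := by positivity
  have e : (2 : ℝ) ^ (t + 1) = 2 * 2 ^ t := by ring
  unfold sawtooth
  generalize hn : ⌊x / 2 ^ (t + 1)⌋ = n at *
  rw [e]
  rcases le_or_gt k n with h | h
  · have h' : (k : ℝ) ≤ n := by exact_mod_cast h
    have := mul_le_mul_of_nonneg_right h' hT.le
    have := neg_abs_le (x - ((n : ℝ) * (2 * 2 ^ t) + 2 ^ t))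
    have := le_abs_self (x - k * (2 * 2 ^ t))
    linarith
  · have h' : (n : ℝ) + 1 ≤ k := by exact_mod_cast h
    have := mul_le_mul_of_nonneg_right h' hT.le
    have := le_abs_self (x - ((n : ℝ) * (2 * 2 ^ t) + 2 ^ t))
    have := neg_abs_le (x - k * (2 * 2 ^ t))
    linarith

lemma saw_eq (t : ℕ) (x : ℝ) : ∃ k : ℤ, sawtooth t x = |x - k * (2 * 2 ^ t)| := by
  obtain ⟨h1, h2⟩ := saw_floor t x
  have e : (2 : ℝ) ^ (t + 1) = 2 * 2 ^ t := by ring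
  unfold sawtooth
  generalize hn : ⌊x / 2 ^ (t + 1)⌋ = n at *
  rw [e]
  rcases le_total 0 (x - ((n : ℝ) * (2 * 2 ^ t) + 2 ^ t)) with h | h
  · refine ⟨n + 1, ?_⟩
    push_cast
    rw [abs_of_nonneg h, abs_of_nonpos (by linarith)]
    ring
  · refine ⟨n, ?_⟩
    rw [abs_of_nonpos h, abs_of_nonneg (by linarith)]
    ring

lemma saw_lip (t : ℕ) (x y : ℝ) : |sawtooth t x - sawtooth t y| ≤ |x - y| := by
  have key : ∀ x y : ℝ, sawtooth t x - sawtooth t y ≤ |x - y| := by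
    intro x y
    obtain ⟨k, hk⟩ := saw_eq t y
    have h1 := saw_le t x k
    have h2 := abs_sub_le x y (k * (2 * 2 ^ t))
    linarith
  rw [abs_le]
  have h1 := key x y
  have h2 := key y x
  rw [abs_sub_comm] at h2
  constructor <;> linarith

lemma tent_lip (T y z : ℝ) :
    |max 0 (min (2 * y - T) (2 * T - y)) - max 0 (min (2 * z - T) (2 * T - z))|
      ≤ 2 * |y - z| := by
  have h1 := abs_max_sub_max_le_max 0 (min (2 * y - T) (2 * T - y)) 0
    (min (2 * z - T) (2 * T - z))
  have h2 := abs_min_sub_min_le_max (2 * y - T) (2 * T - y) (2 * z - T) (2 * T - z)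
  have h3 : |2 * y - T - (2 * z - T)| = 2 * |y - z| := by
    rw [show 2 * y - T - (2 * z - T) = 2 * (y - z) by ring, abs_mul]; norm_num
  have h4 : |2 * T - y - (2 * T - z)| = |y - z| := by
    rw [show 2 * T - y - (2 * T - z) = -(y - z) by ring, abs_neg]
  have h5 := abs_nonneg (y - z)
  rw [h3, h4, max_eq_left (by linarith)] at h2
  refine h1.trans (max_le ?_ h2)
  simp

lemma weight_eq (t s : ℕ) (y l : ℝ) (hs : (2 : ℝ) ^ s ≤ y ∧ y < 2 ^ (s + 1))
    (hl : l = (y - 2 ^ s) / 2 ^ s) :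
    (if t = s then 1 - l else if t = s + 1 then l else 0) * (2 : ℝ) ^ t
      = max 0 (min (2 * y - 2 ^ t) (2 * 2 ^ t - y)) := by
  obtain ⟨h1, h2⟩ := hs
  have hS : (0 : ℝ) < 2 ^ s := by positivity
  have hl' : l * 2 ^ s = y - 2 ^ s := by rw [hl]; field_simp
  have e : (2 : ℝ) ^ (s + 1) = 2 * 2 ^ s := by ring
  split_ifs with c1 c2
  · subst c1
    rw [min_eq_right (by linarith), max_eq_right (by linarith)]
    linarith
  · subst c2
    rw [e] at h2 ⊢
    rw [min_eq_left (by linarith), max_eq_right (by linarith)]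
    linarith
  · rw [zero_mul, eq_comm]
    apply max_eq_left
    rcases lt_or_ge t s with h | h
    · have := pow_le_pow_right₀ (one_le_two : (1 : ℝ) ≤ 2) (show t + 1 ≤ s from h)
      rw [pow_succ] at this
      exact (min_le_right _ _).trans (by linarith)
    · have := pow_le_pow_right₀ (one_le_two : (1 : ℝ) ≤ 2) (show s + 1 + 1 ≤ t by omega)
      rw [pow_succ] at this
      exact (min_le_left _ _).trans (by linarith)

/-- Per-coordinate expansion bound for the root coordinates: with the scale weights
`p_t` built from a `1`-Lipschitz function `b ≥ 1/2`, for every `t`, every `α ∈ [0,1]`,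
`β ∈ [0,4]`, and all `x_v, x_u ≥ 0` with `|x_v - x_u| ≤ d(u,v)`,
`|p_t(v)·g_{t,α,β}(x_v) - p_t(u)·g_{t,α,β}(x_u)| ≤ 12·d(u,v)`. -/
theorem root_coordinate_expansion {V : Type*} [MetricSpace V] (b : V → ℝ)
    (hLip : ∀ u v : V, |b v - b u| ≤ dist u v) (hb : ∀ v : V, (1 : ℝ) / 2 ≤ b v)
    (tv : V → ℕ)
    (htv : ∀ v : V, (2 : ℝ) ^ (tv v) ≤ 2 * b v ∧ 2 * b v < 2 ^ (tv v + 1))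
    (lam : V → ℝ) (hlam : ∀ v : V, lam v = (2 * b v - 2 ^ (tv v)) / 2 ^ (tv v))
    (pw : ℕ → V → ℝ)
    (hpw : ∀ (t : ℕ) (v : V), pw t v =
      if t = tv v then 1 - lam v else if t = tv v + 1 then lam v else 0) :
    ∀ (u v : V) (t : ℕ) (α β : ℝ), α ∈ Set.Icc (0 : ℝ) 1 → β ∈ Set.Icc (0 : ℝ) 4 →
      ∀ xv xu : ℝ, 0 ≤ xv → 0 ≤ xu → |xv - xu| ≤ dist u v →
        |pw t v * sawtooth t (β * xv + α * 2 ^ (t + 1))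
            - pw t u * sawtooth t (β * xu + α * 2 ^ (t + 1))| ≤ 12 * dist u v := by
  intro u v t α β hα hβ xv xu _ _ hx
  have hT : (0 : ℝ) < 2 ^ t := by positivity
  have wv := weight_eq t (tv v) (2 * b v) (lam v) (htv v) (hlam v)
  have wu := weight_eq t (tv u) (2 * b u) (lam u) (htv u) (hlam u)
  rw [← hpw] at wv wu
  have hd := hLip u v
  have hy : |2 * b v - 2 * b u| ≤ 2 * dist u v := by
    rw [← mul_sub, abs_mul, abs_two]; linarith
  have hw : |pw t v - pw t u| * 2 ^ t ≤ 4 * dist u v := by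
    have h := tent_lip (2 ^ t) (2 * b v) (2 * b u)
    rw [← wv, ← wu, ← sub_mul, abs_mul, abs_of_pos hT] at h
    linarith
  have hpu : |pw t u| ≤ 1 := by
    have h0 : 0 ≤ pw t u * 2 ^ t := by rw [wu]; exact le_max_left _ _
    have h1 : pw t u * 2 ^ t ≤ 1 * 2 ^ t := by
      rw [wu]
      refine max_le (by linarith) ?_
      rcases le_total (2 * b u) (2 ^ t) with h | h
      · exact (min_le_left _ _).trans (by linarith)
      · exact (min_le_right _ _).trans (by linarith)
    rw [abs_of_nonneg (nonneg_of_mul_nonneg_left h0 hT)]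
    exact le_of_mul_le_mul_right h1 hT
  set A := β * xv + α * 2 ^ (t + 1) with hA
  set B := β * xu + α * 2 ^ (t + 1) with hB
  have hAB : |sawtooth t A - sawtooth t B| ≤ 4 * dist u v := by
    refine (saw_lip t A B).trans ?_
    rw [show A - B = β * (xv - xu) by rw [hA, hB]; ring, abs_mul, abs_of_nonneg hβ.1]
    exact mul_le_mul hβ.2 hx (abs_nonneg _) (by norm_num)
  obtain ⟨g0, g1⟩ := saw_bounds t A
  have hdn : 0 ≤ dist u v := dist_nonneg
  have t1 : |(pw t v - pw t u) * sawtooth t A| ≤ 4 * dist u v := by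
    rw [abs_mul, abs_of_nonneg g0]
    exact (mul_le_mul_of_nonneg_left g1 (abs_nonneg _)).trans hw
  have t2 : |pw t u * (sawtooth t A - sawtooth t B)| ≤ 1 * (4 * dist u v) := by
    rw [abs_mul]
    exact mul_le_mul hpu hAB (abs_nonneg _) (by norm_num)
  have t3 := abs_add_le ((pw t v - pw t u) * sawtooth t A)
    (pw t u * (sawtooth t A - sawtooth t B))
  rw [show pw t v * sawtooth t A - pw t u * sawtooth t B =
    (pw t v - pw t u) * sawtooth t A + pw t u * (sawtooth t A - sawtooth t B) by ring]
  linarith
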